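/- arXiv:1603.03887 — 2 statements merged into one kernel-verified Lean document; each statement's English description precedes it below -/
import Mathlib

section
/- If T is a unimodal map with exp(h_top(T)) > √2, then the core inverse limit space X' = lim←([T²(c),T(c)],T) is indecomposable, i.e., X' cannot be written as the union of two proper subcontinua. -/
/-- `T : ℝ → ℝ` is a unimodal map on `[0,1]` with critical point `c`. -/
def IsUnimodal (T : ℝ → ℝ) (c : ℝ) : Prop :=
  ContinuousOn T (Set.Icc 0 1) ∧ Set.MapsTo T (Set.Icc 0 1) (Set.Icc 0 1) ∧
    T 0 = 0 ∧ 0 < c ∧ c < 1 ∧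
    StrictMonoOn T (Set.Icc 0 c) ∧ StrictAntiOn T (Set.Icc c 1)

/-- The core inverse limit `X' = lim←([T²(c), T(c)], T)`, modelled as sequences
`x : ℕ → ℝ` where `x n` represents the coordinate `x_{-n}`, all lying in the
core interval `[T²(c), T(c)]`. It carries the product topology (as a subset of `ℕ → ℝ`). -/
def coreInvLimitSet (T : ℝ → ℝ) (c : ℝ) : Set (ℕ → ℝ) :=
  {x | (∀ n, x n ∈ Set.Icc (T (T c)) (T c)) ∧ ∀ n, T (x (n + 1)) = x n}

/-- A set `K` (in a topological space) is indecomposable if it cannot be written as the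
union of two proper subcontinua, where a subcontinuum is a nonempty compact connected subset. -/
def IsIndecomposable {Z : Type*} [TopologicalSpace Z] (K : Set Z) : Prop :=
  ¬ ∃ A B : Set Z, A ⊆ K ∧ B ⊆ K ∧ IsCompact A ∧ IsConnected A ∧ IsCompact B ∧ IsConnected B ∧
      A ≠ K ∧ B ≠ K ∧ A ∪ B = K

/-!
The entropy of a piecewise monotone map is at most the growth rate of its lap numbers: `n` monotone
codes of bounded height are separated by a signed sum of linear height, so a lap carries only
linearly many orbit segments that can be told apart.

Let `a = T²(c)` and `b = T(c)` be the endpoints of the core. If `T(a) ≥ a` and the inverse limit is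
the union of two proper subcontinua, their projections `Aₙ`, `Bₙ` are, for large `n`, proper
subintervals covering the core. If `b ∈ Aₙ₊₁`, then `a = T(b) ∈ Aₙ`, so `b ∉ Aₙ`: the owner of `b`
alternates. It lies to the right of `c`, since otherwise `c ∈ Aₙ₊₁` would give `b = T(c) ∈ Aₙ`.
So each of the two towers is folded at most every second step, the lap numbers grow at most like
`2 ^ (n / 2)`, and the entropy is at most `log √2`.

If `T(a) < a`, the core is not invariant, and the limit has at least three components, so it is not
even the union of two connected sets.
-/

open Set Filter Topology Dynamics ExpGrowth
open scoped ENNReal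

section Laps

variable {α : Type*}

/-- A lap of `T` up to time `n`, in the sense of Milnor and Thurston but not required to be
maximal or convex: a set on which every iterate `T^[k]` with `k ≤ n` is monotone or antitone. -/
def IsLap [Preorder α] (T : α → α) (n : ℕ) (P : Set α) : Prop :=
  ∀ k ≤ n, MonotoneOn T^[k] P ∨ AntitoneOn T^[k] P

/-- The lap number of `T^[n]` on `S` is at most `m`: some `m` laps of `T` up to time `n`
cover `S`. The laps may overlap and need not be contained in `S`. -/
def CoveredByLaps [Preorder α] (T : α → α) (n : ℕ) (S : Set α) (m : ℕ) : Prop :=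
  ∃ 𝒞 : Finset (Set α), 𝒞.card ≤ m ∧ S ⊆ ⋃₀ 𝒞 ∧ ∀ P ∈ 𝒞, IsLap T n P

namespace IsLap

variable [Preorder α] {T : α → α} {m n : ℕ} {P Q : Set α}

theorem anti (hP : IsLap T n P) (hQP : Q ⊆ P) : IsLap T n Q := fun k hk =>
  (hP k hk).imp (·.mono hQP) (·.mono hQP)

theorem zero (T : α → α) (P : Set α) : IsLap T 0 P := fun k hk => by
  obtain rfl : k = 0 := Nat.le_zero.1 hk
  exact Or.inl monotoneOn_id

theorem one (h : MonotoneOn T P ∨ AntitoneOn T P) : IsLap T 1 P := fun k hk => by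
  obtain rfl | rfl : k = 0 ∨ k = 1 := by lia
  · exact zero T P 0 le_rfl
  · exact h

theorem inter_preimage (hP : IsLap T n P) (hQ : IsLap T m Q) :
    IsLap T (m + n) (P ∩ T^[n] ⁻¹' Q) := by
  intro k hk
  rcases le_or_gt k n with hkn | hnk
  · exact hP.anti inter_subset_left k hkn
  obtain ⟨j, rfl⟩ := Nat.exists_eq_add_of_le' hnk.le
  have hmaps : MapsTo T^[n] (P ∩ T^[n] ⁻¹' Q) Q := fun _ hx => hx.2
  rw [Function.iterate_add]
  rcases hQ j (by lia) with hj | hj <;>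
    rcases hP.anti (inter_subset_left (t := T^[n] ⁻¹' Q)) n le_rfl with hn | hn
  · exact Or.inl (hj.comp hn hmaps)
  · exact Or.inr (hj.comp_AntitoneOn hn hmaps)
  · exact Or.inr (hj.comp_MonotoneOn hn hmaps)
  · exact Or.inl (hj.comp hn hmaps)

end IsLap

namespace CoveredByLaps

variable [Preorder α] {T : α → α} {k l m n : ℕ} {S S' : Set α}

theorem of_isLap (hS : IsLap T n S) : CoveredByLaps T n S 1 :=
  ⟨{S}, by simp, by simp, by simpa using hS⟩

theorem mono_right (h : CoveredByLaps T n S l) (hlm : l ≤ m) : CoveredByLaps T n S m :=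
  h.imp fun _ h𝒞 => ⟨h𝒞.1.trans hlm, h𝒞.2⟩

theorem anti (h : CoveredByLaps T n S m) (hS : S' ⊆ S) : CoveredByLaps T n S' m :=
  h.imp fun _ h𝒞 => ⟨h𝒞.1, hS.trans h𝒞.2.1, h𝒞.2.2⟩

theorem union (h : CoveredByLaps T n S l) (h' : CoveredByLaps T n S' m) :
    CoveredByLaps T n (S ∪ S') (l + m) := by
  classical
  obtain ⟨𝒞, hcard, hcover, hlap⟩ := h
  obtain ⟨𝒬, hcard', hcover', hlap'⟩ := h'
  refine ⟨𝒞 ∪ 𝒬, (Finset.card_union_le _ _).trans (add_le_add hcard hcard'), ?_, ?_⟩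
  · rw [Finset.coe_union, sUnion_union]
    exact union_subset_union hcover hcover'
  · exact fun P hP => (Finset.mem_union.1 hP).elim (hlap P) (hlap' P)

theorem comp (h : CoveredByLaps T n S l) (hmaps : MapsTo T^[n] S S')
    (h' : CoveredByLaps T k S' m) : CoveredByLaps T (k + n) S (l * m) := by
  classical
  obtain ⟨𝒞, hcard, hcover, hlap⟩ := h
  obtain ⟨𝒬, hcard', hcover', hlap'⟩ := h'
  refine ⟨(𝒞 ×ˢ 𝒬).image fun PQ => PQ.1 ∩ T^[n] ⁻¹' PQ.2, ?_, fun x hx => ?_, ?_⟩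
  · calc _ ≤ (𝒞 ×ˢ 𝒬).card := Finset.card_image_le
      _ = 𝒞.card * 𝒬.card := Finset.card_product 𝒞 𝒬
      _ ≤ l * m := Nat.mul_le_mul hcard hcard'
  · obtain ⟨P, hP, hxP⟩ := hcover hx
    obtain ⟨Q, hQ, hxQ⟩ := hcover' (hmaps hx)
    exact ⟨_, Finset.mem_image_of_mem _ (Finset.mk_mem_product hP hQ), hxP, hxQ⟩
  · intro R hR
    obtain ⟨⟨P, Q⟩, hPQ, rfl⟩ := Finset.mem_image.1 hR
    obtain ⟨hP, hQ⟩ := Finset.mem_product.1 hPQ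
    exact (hlap P hP).inter_preimage (hlap' Q hQ)

theorem of_mapsTo_self (h : CoveredByLaps T 1 S 1) (hmaps : MapsTo T S S) (n : ℕ) :
    CoveredByLaps T n S 1 := by
  induction n with
  | zero => exact of_isLap (.zero T S)
  | succ n ih => exact h.comp hmaps ih

theorem two_pow_of_alternating {E : ℕ → Set α} (hE : ∀ n, MapsTo T (E (n + 1)) (E n))
    (htwo : ∀ n, CoveredByLaps T 1 (E n) 2)
    (hone : ∀ n, CoveredByLaps T 1 (E n) 1 ∨ CoveredByLaps T 1 (E (n + 1)) 1) (n : ℕ) :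
    CoveredByLaps T n (E n) (2 ^ ((n + 1) / 2)) := by
  induction n using Nat.twoStepInduction with
  | zero => exact of_isLap (.zero T (E 0))
  | one => exact htwo 1
  | more n ih _ =>
    have hstep : CoveredByLaps T (n + 2) (E (n + 2)) (2 * 2 ^ ((n + 1) / 2)) := by
      rcases hone (n + 1) with h | h
      · simpa using (htwo (n + 2)).comp (hE (n + 1)) (h.comp (hE n) ih)
      · simpa using h.comp (hE (n + 1)) ((htwo (n + 1)).comp (hE n) ih)
    rwa [← pow_succ', show (n + 1) / 2 + 1 = (n + 2 + 1) / 2 by lia] at hstep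

-- A piece of the orbit spends some time in `R`, where it meets one lap per step, before it
-- enters `S'`; the time of entry takes at most `n + 1` values.
theorem of_subset_union {R : Set α} (hR : CoveredByLaps T 1 R 1) (hRS : MapsTo T R S)
    (hS : S ⊆ R ∪ S') {m : ℕ → ℕ} (hm : Monotone m) (hm₀ : 1 ≤ m 0)
    (hS' : ∀ n, CoveredByLaps T n S' (m n)) (n : ℕ) : CoveredByLaps T n S ((n + 1) * m n) := by
  induction n with
  | zero => exact (of_isLap (.zero T S)).mono_right (by simpa using hm₀)
  | succ n ih =>
    refine (((hR.comp hRS ih).union (hS' (n + 1))).anti hS).mono_right ?_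
    calc 1 * ((n + 1) * m n) + m (n + 1)
        ≤ (n + 1) * m (n + 1) + m (n + 1) := by
          rw [one_mul]; gcongr; exact hm n.le_succ
      _ = (n + 1 + 1) * m (n + 1) := by ring

end CoveredByLaps

end Laps

section Entropy

variable {α : Type*}

theorem exists_separating_of_monotoneOn_or_antitoneOn {ι G : Type*} [LinearOrder α]
    [AddCommGroup G] [LinearOrder G] [IsOrderedAddMonoid G] {P : Set α} {f : ι → α → G}
    {s : Finset ι} (hf : ∀ i ∈ s, MonotoneOn (f i) P ∨ AntitoneOn (f i) P) :
    ∃ g : α → G, (∀ x, |g x| ≤ ∑ i ∈ s, |f i x|) ∧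
      ∀ x ∈ P, ∀ y ∈ P, g x = g y → ∀ i ∈ s, f i x = f i y := by
  have hsign : ∀ i ∈ s, ∃ e : α → G, MonotoneOn e P ∧ (e = f i ∨ e = -f i) := fun i hi =>
    (hf i hi).elim (fun h => ⟨f i, h, Or.inl rfl⟩) fun h => ⟨-f i, h.neg, Or.inr rfl⟩
  choose! e he hef using hsign
  have eq_of_le : ∀ x ∈ P, ∀ y ∈ P, x ≤ y → ∑ i ∈ s, e i x = ∑ i ∈ s, e i y →
      ∀ i ∈ s, f i x = f i y := by
    intro x hx y hy hxy hsum i hi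
    have hei := (Finset.sum_eq_sum_iff_of_le fun j hj => he j hj hx hy hxy).1 hsum i hi
    rcases hef i hi with h | h <;> simpa [h] using hei
  refine ⟨fun x => ∑ i ∈ s, e i x, fun x => ?_, fun x hx y hy hxy i hi => ?_⟩
  · refine (Finset.abs_sum_le_sum_abs _ _).trans (Finset.sum_le_sum fun i hi => ?_)
    rcases hef i hi with h | h <;> simp [h]
  · rcases le_total x y with h | h
    · exact eq_of_le x hx y hy h hxy i hi
    · exact (eq_of_le y hy x hx h hxy.symm i hi).symm

theorem coverMincard_le_encard_image {β : Type*} {T : α → α} {P : Set α} {U : SetRel α α}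
    {n : ℕ} {g : α → β} (hg : ∀ x ∈ P, ∀ y ∈ P, g x = g y → (x, y) ∈ dynEntourage T U n) :
    coverMincard T P U n ≤ (g '' P).encard := by
  obtain ⟨s, hsP, hs⟩ := exists_subset_bijOn P g
  rcases (g '' P).finite_or_infinite with hfin | hinf
  · lift s to Finset α using hs.finite_iff_finite.2 hfin
    rw [← hs.image_eq, hs.injOn.encard_image, encard_coe_eq_coe_finsetCard]
    refine IsDynCoverOf.coverMincard_le_card fun x hx => ?_
    obtain ⟨y, hy, hyx⟩ := hs.surjOn (mem_image_of_mem g hx)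
    exact ⟨y, hy, hg x hx y (hsP hy) hyx.symm⟩
  · simp [hinf.encard_eq]

theorem IsLap.coverMincard_le [LinearOrder α] {T : α → α} {n : ℕ} {P : Set α}
    (hP : IsLap T n P) {r : α → ℤ} (hr : Monotone r) {U : SetRel α α}
    (hU : ∀ x y, r x = r y → (x, y) ∈ U) {B : ℕ} (hB : ∀ x ∈ P, ∀ k < n, |r (T^[k] x)| ≤ B) :
    coverMincard T P U n ≤ (2 * (n * B) + 1 : ℕ) := by
  obtain ⟨g, hg_le, hg⟩ := exists_separating_of_monotoneOn_or_antitoneOn (P := P)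
    (f := fun k x => r (T^[k] x)) (s := Finset.range n) fun k hk =>
      (hP k (Finset.mem_range.1 hk).le).imp hr.comp_monotoneOn hr.comp_antitoneOn
  have himage : g '' P ⊆ Finset.Icc (-(n * B : ℤ)) (n * B) := by
    rintro _ ⟨x, hx, rfl⟩
    have hsum : ∑ k ∈ Finset.range n, |r (T^[k] x)| ≤ n * B := by
      simpa using Finset.sum_le_card_nsmul _ _ _ fun k hk => hB x hx k (Finset.mem_range.1 hk)
    simpa using abs_le.1 ((hg_le x).trans hsum)
  have hcode : ∀ x ∈ P, ∀ y ∈ P, g x = g y → (x, y) ∈ dynEntourage T U n :=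
    fun x hx y hy hxy => mem_dynEntourage.2 fun k hk =>
      hU _ _ (hg x hx y hy hxy k (Finset.mem_range.2 hk))
  calc coverMincard T P U n ≤ (g '' P).encard := coverMincard_le_encard_image hcode
    _ ≤ (Finset.Icc (-(n * B : ℤ)) (n * B) : Set ℤ).encard := encard_le_encard himage
    _ = (2 * (n * B) + 1 : ℕ) := by
      rw [encard_coe_eq_coe_finsetCard, Int.card_Icc]
      congr 1
      lia

theorem coverMincard_biUnion_le {ι : Type*} (T : α → α) (U : SetRel α α) (n : ℕ)
    (s : Finset ι) (F : ι → Set α) :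
    coverMincard T (⋃ i ∈ s, F i) U n ≤ ∑ i ∈ s, coverMincard T (F i) U n := by
  classical
  induction s using Finset.induction_on with
  | empty => simp
  | insert i s hi ih =>
    rw [Finset.set_biUnion_insert, Finset.sum_insert hi]
    exact (coverMincard_union_le T (F i) _ U n).trans (by gcongr)

theorem CoveredByLaps.coverMincard_le [LinearOrder α] {T : α → α} {n m : ℕ} {F : Set α}
    (hF : CoveredByLaps T n F m) {r : α → ℤ} (hr : Monotone r) {U : SetRel α α}
    (hU : ∀ x y, r x = r y → (x, y) ∈ U) {B : ℕ} (hB : ∀ x ∈ F, ∀ k < n, |r (T^[k] x)| ≤ B) :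
    coverMincard T F U n ≤ (m * (2 * (n * B) + 1) : ℕ) := by
  classical
  obtain ⟨𝒞, hcard, hcover, hlap⟩ := hF
  have hpiece : ∀ P ∈ 𝒞, coverMincard T (P ∩ F) U n ≤ (2 * (n * B) + 1 : ℕ) := fun P hP =>
    ((hlap P hP).anti inter_subset_left).coverMincard_le hr hU fun x hx => hB x hx.2
  have hF_eq : F = ⋃ P ∈ 𝒞, P ∩ F := by
    rw [← iUnion₂_inter, ← Finset.set_biUnion_coe, ← sUnion_eq_biUnion, inter_eq_right.2 hcover]
  calc coverMincard T F U n = coverMincard T (⋃ P ∈ 𝒞, P ∩ F) U n := by rw [← hF_eq]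
    _ ≤ ∑ P ∈ 𝒞, coverMincard T (P ∩ F) U n := coverMincard_biUnion_le T U n 𝒞 _
    _ ≤ 𝒞.card • ((2 * (n * B) + 1 : ℕ) : ℕ∞) := Finset.sum_le_card_nsmul _ _ _ hpiece
    _ ≤ (m * (2 * (n * B) + 1) : ℕ) := by
      rw [nsmul_eq_mul]
      exact_mod_cast Nat.mul_le_mul_right _ hcard

theorem expGrowthSup_natCast_add_one :
    expGrowthSup (fun n => ((n + 1 : ℕ) : ℝ≥0∞)) = 0 := by
  have hreal : Tendsto (fun n : ℕ => Real.log (n + 1 : ℕ) / n) atTop (𝓝 0) :=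
    ((Real.tendsto_pow_log_div_mul_add_atTop 1 (-1) 1 one_ne_zero).comp
      (tendsto_natCast_atTop_atTop.comp (tendsto_add_atTop_nat 1))).congr fun n => by simp
  refine ((continuous_coe_real_ereal.tendsto 0).comp hreal).congr (fun n => ?_) |>.limsup_eq
  rw [Function.comp_apply, EReal.coe_div, ← ENNReal.log_ofReal_of_pos (by positivity),
    ENNReal.ofReal_natCast, EReal.coe_coe_eq_natCast]

theorem expGrowthSup_natCast_add_one_mul_le (u : ℕ → ℝ≥0∞) :
    expGrowthSup (fun n => ((n + 1 : ℕ) : ℝ≥0∞) * u n) ≤ expGrowthSup u := by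
  have hzero := expGrowthSup_natCast_add_one
  calc expGrowthSup (fun n => ((n + 1 : ℕ) : ℝ≥0∞) * u n)
      ≤ expGrowthSup (fun n => ((n + 1 : ℕ) : ℝ≥0∞)) + expGrowthSup u :=
        expGrowthSup_mul_le (Or.inl (by rw [hzero]; exact EReal.zero_ne_bot))
          (Or.inl (by rw [hzero]; exact EReal.zero_ne_top))
    _ = expGrowthSup u := by rw [hzero, zero_add]

theorem coverEntropy_le_expGrowthSup {T : ℝ → ℝ} {F : Set ℝ} (hF : Bornology.IsBounded F)
    (hT : MapsTo T F F) {m : ℕ → ℕ} (hm : ∀ n, CoveredByLaps T n F (m n)) :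
    coverEntropy T F ≤ expGrowthSup fun n => (m n : ℝ≥0∞) := by
  rw [coverEntropy_eq_iSup_basis Metric.uniformity_basis_dist]
  refine iSup₂_le fun ε hε => ?_
  obtain ⟨C, hC⟩ := hF.exists_norm_le
  set r : ℝ → ℤ := fun x => ⌊x / ε⌋
  have hr : Monotone r := fun x y hxy => Int.floor_mono (by gcongr)
  obtain ⟨B, hB⟩ : ∃ B : ℕ, ∀ x ∈ F, |r x| ≤ B := by
    refine ⟨(max |⌊C / ε⌋| |⌊-C / ε⌋|).toNat, fun x hx => ?_⟩
    have hx' := abs_le.1 (hC x hx)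
    rw [Int.toNat_of_nonneg (by positivity), max_comm]
    exact abs_le_max_abs_abs (hr hx'.1) (hr hx'.2)
  have hU : ∀ x y, r x = r y → (x, y) ∈ {p : ℝ × ℝ | dist p.1 p.2 < ε} := fun x y hxy => by
    have h := Int.abs_sub_lt_one_of_floor_eq_floor hxy
    rwa [← sub_div, abs_div, abs_of_pos hε, div_lt_one hε] at h
  have hcount : ∀ n, coverMincard T F {p : ℝ × ℝ | dist p.1 p.2 < ε} n ≤
      (m n * (2 * (n * B) + 1) : ℕ) := fun n =>
    (hm n).coverMincard_le hr hU fun x hx k _ => hB _ (hT.iterate k hx)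
  have hnat : ∀ n, m n * (2 * (n * B) + 1) ≤ (2 * B + 1) * ((n + 1) * m n) := fun n => by
    nlinarith [Nat.zero_le (m n * (2 * B + n))]
  refine le_trans ?_ (expGrowthSup_natCast_add_one_mul_le fun n => (m n : ℝ≥0∞))
  refine expGrowthSup_le_of_eventually_le (b := (2 * B + 1 : ℕ)) (ENNReal.natCast_ne_top _)
    (Eventually.of_forall fun n => ?_)
  exact_mod_cast (ENat.toENNReal_mono ((hcount n).trans (Nat.cast_le.2 (hnat n))))

theorem expGrowthSup_two_mul_two_pow_le :
    expGrowthSup (fun n => ((2 * 2 ^ ((n + 1) / 2) : ℕ) : ℝ≥0∞)) ≤ (Real.log √2 : EReal) := by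
  have hpow : ∀ n : ℕ, ((2 * 2 ^ ((n + 1) / 2) : ℕ) : ℝ) ≤ 4 * √2 ^ n := fun n => by
    calc ((2 * 2 ^ ((n + 1) / 2) : ℕ) : ℝ) = 2 * √2 ^ (2 * ((n + 1) / 2)) := by
          rw [pow_mul, Real.sq_sqrt zero_le_two]; push_cast; rfl
      _ ≤ 2 * √2 ^ (n + 1) := by
          gcongr
          · exact Real.one_le_sqrt.2 one_le_two
          · exact Nat.mul_div_le _ _
      _ = 2 * √2 * √2 ^ n := by ring
      _ ≤ 4 * √2 ^ n := by
          gcongr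
          nlinarith [Real.sq_sqrt (zero_le_two (α := ℝ)), Real.sqrt_nonneg 2]
  rw [← ENNReal.log_ofReal_of_pos (by positivity), ← expGrowthSup_pow]
  refine expGrowthSup_le_of_eventually_le (b := 4) (by simp) (Eventually.of_forall fun n => ?_)
  rw [← ENNReal.ofReal_pow (by positivity), ← ENNReal.ofReal_natCast]
  refine (ENNReal.ofReal_le_ofReal (hpow n)).trans_eq ?_
  rw [ENNReal.ofReal_mul (by positivity)]
  simp

end Entropy

/-- A unimodal map of `[u, v]` with turning point `c`, in the weak sense: plateaus and an
endpoint turning point are allowed, and nothing is prescribed at `u` and `v`. -/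
structure IsWeaklyUnimodalOn (T : ℝ → ℝ) (u v c : ℝ) : Prop where
  crit_mem : c ∈ Icc u v
  continuousOn : ContinuousOn T (Icc u v)
  mapsTo : MapsTo T (Icc u v) (Icc u v)
  monotoneOn : MonotoneOn T (Icc u c)
  antitoneOn : AntitoneOn T (Icc c v)

theorem IsUnimodal.isWeaklyUnimodalOn {T : ℝ → ℝ} {c : ℝ} (hT : IsUnimodal T c) :
    IsWeaklyUnimodalOn T 0 1 c := by
  obtain ⟨hcont, hmaps, -, h0c, hc1, hmono, hanti⟩ := hT
  exact ⟨⟨h0c.le, hc1.le⟩, hcont, hmaps, hmono.monotoneOn, hanti.antitoneOn⟩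

/-- A proper subsystem of the inverse system `⋯ → S → S` with bonding map `T`, with convex
levels: the projections of a proper subcontinuum of `lim←(S, T)`, far enough out. -/
structure IsProperTower (T : ℝ → ℝ) (S : Set ℝ) (E : ℕ → Set ℝ) : Prop where
  ordConnected : ∀ n, (E n).OrdConnected
  mapsTo : ∀ n, MapsTo T (E (n + 1)) (E n)
  ssubset : ∀ n, E n ⊂ S

namespace IsWeaklyUnimodalOn

variable {T : ℝ → ℝ} {u v c : ℝ} {S : Set ℝ}

theorem apply_crit_mem (hT : IsWeaklyUnimodalOn T u v c) : T c ∈ Icc u v := hT.mapsTo hT.crit_mem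

theorem apply_le (hT : IsWeaklyUnimodalOn T u v c) {x : ℝ} (hx : x ∈ Icc u v) : T x ≤ T c := by
  rcases le_total x c with h | h
  · exact hT.monotoneOn ⟨hx.1, h⟩ ⟨hT.crit_mem.1, le_rfl⟩ h
  · exact hT.antitoneOn ⟨le_rfl, hT.crit_mem.2⟩ ⟨h, hx.2⟩ h

theorem coveredByLaps_left (hT : IsWeaklyUnimodalOn T u v c) (hS : S ⊆ Icc u c) :
    CoveredByLaps T 1 S 1 :=
  .of_isLap (.one (.inl (hT.monotoneOn.mono hS)))

theorem coveredByLaps_right (hT : IsWeaklyUnimodalOn T u v c) (hS : S ⊆ Icc c v) :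
    CoveredByLaps T 1 S 1 :=
  .of_isLap (.one (.inr (hT.antitoneOn.mono hS)))

theorem coveredByLaps_two (hT : IsWeaklyUnimodalOn T u v c) (hS : S ⊆ Icc u v) :
    CoveredByLaps T 1 S 2 :=
  ((hT.coveredByLaps_left subset_rfl).union (hT.coveredByLaps_right subset_rfl)).anti
    (hS.trans (Icc_union_Icc_eq_Icc hT.crit_mem.1 hT.crit_mem.2).superset)

theorem coverEntropy_le_of_core (hT : IsWeaklyUnimodalOn T u v c) {a b : ℝ} (hac : a ≤ c)
    (hcb : c ≤ b) (hb : T c ≤ b) {m : ℕ → ℕ} (hm : Monotone m) (hm₀ : 1 ≤ m 0)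
    (hcore : ∀ n, CoveredByLaps T n (Icc a b) (m n)) :
    coverEntropy T (Icc u v) ≤ expGrowthSup fun n => (m n : ℝ≥0∞) := by
  have hleft : ∀ n, CoveredByLaps T n (Icc u (min b v)) ((n + 1) * m n) := by
    refine CoveredByLaps.of_subset_union (R := Icc u c ∩ Iio a)
      (hT.coveredByLaps_left inter_subset_left) ?_ ?_ hm hm₀ hcore
    · intro x hx
      have hxuv : x ∈ Icc u v := Icc_subset_Icc_right hT.crit_mem.2 hx.1
      exact ⟨(hT.mapsTo hxuv).1, le_min ((hT.apply_le hxuv).trans hb) (hT.mapsTo hxuv).2⟩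
    · intro x hx
      exact (lt_or_ge x a).imp (fun h => ⟨⟨hx.1, h.le.trans hac⟩, h⟩)
        fun h => ⟨h, hx.2.trans (min_le_left b v)⟩
  have hall : ∀ n, CoveredByLaps T n (Icc u v) ((n + 1) * ((n + 1) * m n)) := by
    refine CoveredByLaps.of_subset_union (R := Icc c v ∩ Ioi b)
      (hT.coveredByLaps_right inter_subset_left) ?_ ?_ ?_ ?_ hleft
    · exact hT.mapsTo.mono_left (inter_subset_left.trans (Icc_subset_Icc_left hT.crit_mem.1))
    · intro x hx
      exact (lt_or_ge b x).imp (fun h => ⟨⟨hcb.trans h.le, hx.2⟩, h⟩)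
        fun h => ⟨hx.1, le_min h hx.2⟩
    · exact fun i j hij => Nat.mul_le_mul (by lia) (hm hij)
    · simpa using hm₀
  refine (coverEntropy_le_expGrowthSup (Metric.isBounded_Icc u v) hT.mapsTo hall).trans ?_
  simp only [Nat.cast_mul]
  exact (expGrowthSup_natCast_add_one_mul_le _).trans (expGrowthSup_natCast_add_one_mul_le _)

theorem coverEntropy_le_zero_of_core (hT : IsWeaklyUnimodalOn T u v c) {a b : ℝ} (hac : a ≤ c)
    (hcb : c ≤ b) (hb : T c ≤ b) (hmaps : MapsTo T (Icc a b) (Icc a b))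
    (hlap : CoveredByLaps T 1 (Icc a b) 1) : coverEntropy T (Icc u v) ≤ 0 := by
  refine (hT.coverEntropy_le_of_core hac hcb hb monotone_const le_rfl
    (hlap.of_mapsTo_self hmaps)).trans_eq ?_
  simpa using expGrowthSup_const one_ne_zero ENNReal.one_ne_top

theorem crit_lt_apply (hT : IsWeaklyUnimodalOn T u v c)
    (hent : 0 < coverEntropy T (Icc u v)) : c < T c := by
  by_contra! h
  have hsub : Icc u c ⊆ Icc u v := Icc_subset_Icc_right hT.crit_mem.2
  exact hent.not_ge <| hT.coverEntropy_le_zero_of_core hT.crit_mem.1 le_rfl h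
    (fun x hx => ⟨(hT.mapsTo (hsub hx)).1, (hT.apply_le (hsub hx)).trans h⟩)
    (hT.coveredByLaps_left subset_rfl)

theorem apply_apply_lt_crit (hT : IsWeaklyUnimodalOn T u v c)
    (hent : 0 < coverEntropy T (Icc u v)) : T (T c) < c := by
  by_contra! h
  have hcTc := hT.crit_lt_apply hent
  have hsub : Icc c (T c) ⊆ Icc c v := Icc_subset_Icc_right hT.apply_crit_mem.2
  refine hent.not_ge <| hT.coverEntropy_le_zero_of_core le_rfl hcTc.le le_rfl
    (fun x hx => ⟨?_, ?_⟩) (hT.coveredByLaps_right hsub)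
  · exact h.trans (hT.antitoneOn (hsub hx) ⟨hcTc.le, hT.apply_crit_mem.2⟩ hx.2)
  · exact hT.apply_le (Icc_subset_Icc_left hT.crit_mem.1 (hsub hx))

theorem core_subset (hT : IsWeaklyUnimodalOn T u v c) : Icc (T (T c)) (T c) ⊆ Icc u v :=
  Icc_subset_Icc (hT.mapsTo hT.apply_crit_mem).1 hT.apply_crit_mem.2

theorem surjOn_core (hT : IsWeaklyUnimodalOn T u v c) (hTTc : T (T c) ≤ c) (hc : c ≤ T c) :
    SurjOn T (Icc (T (T c)) (T c)) (Icc (T (T c)) (T c)) :=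
  (intermediate_value_Icc' hc
    (hT.continuousOn.mono (Icc_subset_Icc hT.crit_mem.1 hT.apply_crit_mem.2))).trans
      (image_mono (Icc_subset_Icc_left hTTc))

theorem mapsTo_core (hT : IsWeaklyUnimodalOn T u v c) (hTTc : T (T c) ≤ c)
    (hinv : T (T c) ≤ T (T (T c))) :
    MapsTo T (Icc (T (T c)) (T c)) (Icc (T (T c)) (T c)) := by
  intro x hx
  have hxuv := hT.core_subset hx
  refine ⟨?_, hT.apply_le hxuv⟩
  rcases le_total x c with hxc | hcx
  · exact hinv.trans (hT.monotoneOn ⟨(hT.mapsTo hT.apply_crit_mem).1, hTTc⟩ ⟨hxuv.1, hxc⟩ hx.1)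
  · exact hT.antitoneOn ⟨hcx, hxuv.2⟩ ⟨hcx.trans hx.2, hT.apply_crit_mem.2⟩ hx.2

end IsWeaklyUnimodalOn

namespace IsProperTower

variable {T : ℝ → ℝ} {a b c u v : ℝ} {E F : ℕ → Set ℝ}

theorem notMem_or_notMem (hE : IsProperTower T (Icc a b) E) (n : ℕ) : a ∉ E n ∨ b ∉ E n := by
  by_contra! h
  exact (hE.ssubset n).not_subset ((hE.ordConnected n).out h.1 h.2)

theorem subset_Ici_of_mem (hE : IsProperTower T (Icc (T (T c)) (T c)) E) (hc : c ≤ T c) {n : ℕ}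
    (h : T c ∈ E (n + 1)) : E (n + 1) ⊆ Ici c := by
  intro x hx
  rw [mem_Ici]
  by_contra! hxc
  have hcE : c ∈ E (n + 1) := (hE.ordConnected _).out hx h ⟨hxc.le, hc⟩
  exact (hE.notMem_or_notMem n).elim (· (hE.mapsTo n h)) (· (hE.mapsTo n hcE))

theorem mem_or_mem_succ (hF : IsProperTower T (Icc (T (T c)) (T c)) F)
    (hcover : ∀ n, T c ∈ E n ∪ F n) (n : ℕ) : T c ∈ E n ∨ T c ∈ E (n + 1) := by
  by_contra! h
  have hn : T c ∈ F n := (hcover n).resolve_left h.1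
  have hsucc : T c ∈ F (n + 1) := (hcover (n + 1)).resolve_left h.2
  exact (hF.notMem_or_notMem n).elim (· (hF.mapsTo n hsucc)) (· hn)

theorem coveredByLaps (hT : IsWeaklyUnimodalOn T u v c) (hc : c ≤ T c)
    (hE : IsProperTower T (Icc (T (T c)) (T c)) E) (hF : IsProperTower T (Icc (T (T c)) (T c)) F)
    (hcover : ∀ n, T c ∈ E n ∪ F n) (n : ℕ) :
    CoveredByLaps T n (E (n + 1)) (2 ^ ((n + 1) / 2)) := by
  have hsub : ∀ n, E n ⊆ Icc u v := fun n => (hE.ssubset n).subset.trans hT.core_subset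
  have hone : ∀ n, T c ∈ E (n + 1) → CoveredByLaps T 1 (E (n + 1)) 1 := fun n h =>
    hT.coveredByLaps_right fun x hx => ⟨hE.subset_Ici_of_mem hc h hx, (hsub _ hx).2⟩
  exact CoveredByLaps.two_pow_of_alternating (E := fun n => E (n + 1))
    (fun n => hE.mapsTo (n + 1)) (fun n => hT.coveredByLaps_two (hsub _))
    (fun n => (hF.mem_or_mem_succ hcover (n + 1)).imp (hone n) (hone (n + 1))) n

theorem coverEntropy_le (hT : IsWeaklyUnimodalOn T u v c) (hc : c ≤ T c) (hTTc : T (T c) ≤ c)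
    (hE : IsProperTower T (Icc (T (T c)) (T c)) E) (hF : IsProperTower T (Icc (T (T c)) (T c)) F)
    (hcover : ∀ n, Icc (T (T c)) (T c) ⊆ E n ∪ F n) :
    coverEntropy T (Icc u v) ≤ (Real.log √2 : EReal) := by
  have hmem : ∀ n, T c ∈ E n ∪ F n := fun n => hcover n ⟨hTTc.trans hc, le_rfl⟩
  have hlaps : ∀ n, CoveredByLaps T n (Icc (T (T c)) (T c)) (2 * 2 ^ ((n + 1) / 2)) := fun n => by
    rw [two_mul]
    exact ((hE.coveredByLaps hT hc hF hmem n).union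
      (hF.coveredByLaps hT hc hE (fun n => (hmem n).symm) n)).anti (hcover (n + 1))
  refine (hT.coverEntropy_le_of_core hTTc hc le_rfl (fun i j hij => ?_) (by simp) hlaps).trans
    expGrowthSup_two_mul_two_pow_le
  gcongr
  exact one_le_two

end IsProperTower

section InverseLimit

variable {α : Type*} {T : α → α} {S : Set α}

/-- The inverse limit `lim←(S, T)` as a set of sequences, `x n` standing for the coordinate
`x_{-n}`. It is not assumed that `T` maps `S` into itself, so `S` may contain points which are
not coordinates of any element. `coreInvLimitSet T c` unfolds to
`invLimitSet T (Icc (T (T c)) (T c))`. -/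
def invLimitSet (T : α → α) (S : Set α) : Set (ℕ → α) :=
  {x | (∀ n, x n ∈ S) ∧ ∀ n, T (x (n + 1)) = x n}

theorem iterate_apply_add_of_apply_succ {x : ℕ → α} (hx : ∀ n, T (x (n + 1)) = x n) (n k : ℕ) :
    T^[k] (x (n + k)) = x n := by
  induction k with
  | zero => rfl
  | succ k ih => rw [Function.iterate_succ_apply, ← add_assoc, hx, ih]

theorem mem_image_eval_invLimitSet (hS : SurjOn T S S) {n : ℕ} {y : α} :
    y ∈ Function.eval n '' invLimitSet T S ↔ ∀ k ≤ n, T^[k] y ∈ S := by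
  refine ⟨?_, fun hy => ?_⟩
  · rintro ⟨x, hx, rfl⟩ k hk
    obtain ⟨j, rfl⟩ := Nat.exists_eq_add_of_le' hk
    simpa only [Function.eval, iterate_apply_add_of_apply_succ hx.2] using hx.1 j
  have : Nonempty α := ⟨y⟩
  have hmaps : MapsTo (Function.invFunOn T S) S S := hS.mapsTo_invFunOn
  have hinv : RightInvOn (Function.invFunOn T S) T S := hS.rightInvOn_invFunOn
  refine ⟨fun k => (Function.invFunOn T S)^[k - n] (T^[n - k] y), ⟨fun k => ?_, fun k => ?_⟩,
    by simp⟩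
  · exact hmaps.iterate _ (hy _ (Nat.sub_le n k))
  rcases lt_or_ge k n with hkn | hnk
  · simp only [Nat.sub_eq_zero_of_le hkn, Nat.sub_eq_zero_of_le hkn.le, Function.iterate_zero, id]
    rw [← Function.iterate_succ_apply' T, show (n - (k + 1)).succ = n - k by lia]
  · simp only [Nat.sub_eq_zero_of_le hnk, Nat.sub_eq_zero_of_le (hnk.trans k.le_succ),
      Nat.succ_sub hnk, Function.iterate_succ_apply', Function.iterate_zero, id]
    exact hinv (hmaps.iterate _ (hy 0 n.zero_le))

theorem subset_image_eval_invLimitSet (hS : SurjOn T S S) (hmaps : MapsTo T S S) (n : ℕ) :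
    S ⊆ Function.eval n '' invLimitSet T S := fun _ hy =>
  (mem_image_eval_invLimitSet hS).2 fun k _ => hmaps.iterate k hy

theorem eq_invLimitSet_of_forall_subset_image_eval [TopologicalSpace α] {A : Set (ℕ → α)}
    (hA : IsClosed A) (hAS : A ⊆ invLimitSet T S) (hfull : ∀ n, S ⊆ Function.eval n '' A) :
    A = invLimitSet T S := by
  refine hAS.antisymm fun x hx => ?_
  choose y hyA hy using fun n => hfull n (hx.1 n)
  have hagree : ∀ k n, k ≤ n → y n k = x k := fun k n hkn => by
    obtain ⟨j, rfl⟩ := Nat.exists_eq_add_of_le hkn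
    rw [← iterate_apply_add_of_apply_succ hx.2 k j, ← hy (k + j), Function.eval,
      iterate_apply_add_of_apply_succ (hAS (hyA _)).2]
  have hlim : Tendsto y atTop (𝓝 x) := tendsto_pi_nhds.2 fun k =>
    tendsto_const_nhds.congr' ((eventually_ge_atTop k).mono fun n hn => (hagree k n hn).symm)
  exact hA.mem_of_tendsto hlim (Eventually.of_forall hyA)

theorem exists_forall_ge_not_subset_image_eval [TopologicalSpace α] {A : Set (ℕ → α)}
    (hS : SurjOn T S S) (hA : IsClosed A) (hAS : A ⊆ invLimitSet T S) (hne : A ≠ invLimitSet T S) :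
    ∃ N, ∀ n ≥ N, ¬ S ⊆ Function.eval n '' A := by
  by_contra! h
  refine hne (eq_invLimitSet_of_forall_subset_image_eval hA hAS fun m y hy => ?_)
  obtain ⟨n, hmn, hn⟩ := h m
  obtain ⟨j, rfl⟩ := Nat.exists_eq_add_of_le hmn
  obtain ⟨_, hz, rfl⟩ := hS.iterate j hy
  obtain ⟨x, hx, rfl⟩ := hn hz
  exact ⟨x, hx, (iterate_apply_add_of_apply_succ (hAS hx).2 m j).symm⟩

theorem ordConnected_image_eval [LinearOrder α] [TopologicalSpace α] [OrderClosedTopology α]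
    {A : Set (ℕ → α)} (hA : IsPreconnected A) (n : ℕ) : (Function.eval n '' A).OrdConnected :=
  (hA.image _ (continuous_apply n).continuousOn).ordConnected

theorem exists_isProperTower {T : ℝ → ℝ} {S : Set ℝ} {A : Set (ℕ → ℝ)} (hS : SurjOn T S S)
    (hA : IsClosed A) (hconn : IsPreconnected A) (hAS : A ⊆ invLimitSet T S)
    (hne : A ≠ invLimitSet T S) :
    ∃ N, ∀ M ≥ N, IsProperTower T S fun n => Function.eval (M + n) '' A := by
  obtain ⟨N, hN⟩ := exists_forall_ge_not_subset_image_eval hS hA hAS hne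
  refine ⟨N, fun M hM => ⟨fun n => ordConnected_image_eval hconn _, fun n => ?_, fun n => ⟨?_, ?_⟩⟩⟩
  · rintro _ ⟨x, hx, rfl⟩
    exact ⟨x, hx, ((hAS hx).2 _).symm⟩
  · rintro _ ⟨x, hx, rfl⟩
    exact (hAS hx).1 _
  · exact hN _ (hM.trans (M.le_add_right n))

end InverseLimit

theorem mem_or_mem_of_ordConnected_union {α : Type*} [LinearOrder α] {A B : Set α}
    (hA : A.OrdConnected) (hB : B.OrdConnected) {x p y q z : α} (hx : x ∈ A ∪ B) (hy : y ∈ A ∪ B)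
    (hz : z ∈ A ∪ B) (hp : p ∈ Icc x y) (hq : q ∈ Icc y z) : p ∈ A ∪ B ∨ q ∈ A ∪ B := by
  have hp' : p ∈ Icc x z := ⟨hp.1, hp.2.trans (hq.1.trans hq.2)⟩
  rcases hx with hx | hx <;> rcases hy with hy | hy <;> rcases hz with hz | hz
  · exact .inl (.inl (hA.out hx hy hp))
  · exact .inl (.inl (hA.out hx hy hp))
  · exact .inl (.inl (hA.out hx hz hp'))
  · exact .inr (.inr (hB.out hy hz hq))
  · exact .inr (.inl (hA.out hy hz hq))
  · exact .inl (.inr (hB.out hx hz hp'))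
  · exact .inl (.inr (hB.out hx hy hp))
  · exact .inl (.inr (hB.out hx hy hp))

namespace IsWeaklyUnimodalOn

variable {T : ℝ → ℝ} {u v c : ℝ}

theorem coverEntropy_le_of_not_isIndecomposable (hT : IsWeaklyUnimodalOn T u v c) (hc : c ≤ T c)
    (hTTc : T (T c) ≤ c) (hinv : T (T c) ≤ T (T (T c)))
    (hdec : ¬ IsIndecomposable (coreInvLimitSet T c)) :
    coverEntropy T (Icc u v) ≤ (Real.log √2 : EReal) := by
  obtain ⟨A, B, hAK, hBK, hA, hA', hB, hB', hAne, hBne, hAB⟩ := not_not.1 hdec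
  have hS := hT.surjOn_core hTTc hc
  obtain ⟨M, hM⟩ := exists_isProperTower hS hA.isClosed hA'.isPreconnected hAK hAne
  obtain ⟨N, hN⟩ := exists_isProperTower hS hB.isClosed hB'.isPreconnected hBK hBne
  refine (hM _ (le_max_left M N)).coverEntropy_le hT hc hTTc (hN _ (le_max_right M N)) fun n => ?_
  rw [← image_union, hAB]
  exact subset_image_eval_invLimitSet hS (hT.mapsTo_core hTTc hinv) _

theorem exists_fixedPt_and_preimages (hT : IsWeaklyUnimodalOn T u v c) (hc : c ≤ T c)
    (hTTc : T (T c) ≤ c) (hesc : T (T (T c)) ≤ T (T c)) :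
    ∃ p' ∈ Icc (T (T c)) c, ∃ p ∈ Icc c (T c), ∃ r ∈ Icc p (T c), ∃ q ∈ Icc p r,
      T p = p ∧ T p' = p ∧ T r = p' ∧ T q = c := by
  have hcont : ContinuousOn T (Icc (T (T c)) (T c)) := hT.continuousOn.mono hT.core_subset
  obtain ⟨p, hp, hTp⟩ : ∃ p ∈ Icc c (T c), T p = p :=
    exists_mem_Icc_isFixedPt (hcont.mono (Icc_subset_Icc_left hTTc)) hc hc (hTTc.trans hc)
  obtain ⟨p', hp', hTp'⟩ : ∃ p' ∈ Icc (T (T c)) c, T p' = p :=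
    intermediate_value_Icc hTTc (hcont.mono (Icc_subset_Icc_right hc))
      ⟨hesc.trans (hTTc.trans hp.1), hp.2⟩
  obtain ⟨r, hr, hTr⟩ : ∃ r ∈ Icc p (T c), T r = p' :=
    intermediate_value_Icc' hp.2 (hcont.mono (Icc_subset_Icc_left (hTTc.trans hp.1)))
      ⟨hp'.1, hp'.2.trans (hp.1.trans_eq hTp.symm)⟩
  obtain ⟨q, hq, hTq⟩ : ∃ q ∈ Icc p r, T q = c :=
    intermediate_value_Icc' hr.1 (hcont.mono (Icc_subset_Icc (hTTc.trans hp.1) hr.2))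
      ⟨hTr.trans_le hp'.2, hp.1.trans_eq hTp.symm⟩
  exact ⟨p', hp', p, hp, r, hr, q, hq, hTp, hTp', hTr, hTq⟩

-- The level-4 projection of the limit misses `c` and a preimage `q` of `c`, because `T³(c)` lies
-- outside the core, but meets all three intervals that they separate.
theorem isIndecomposable_of_apply_apply_apply_lt (hT : IsWeaklyUnimodalOn T u v c) (hc : c ≤ T c)
    (hTTc : T (T c) ≤ c) (hesc : T (T (T c)) < T (T c)) :
    IsIndecomposable (coreInvLimitSet T c) := by
  rintro ⟨A, B, -, -, -, hA, -, hB, -, -, hAB⟩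
  obtain ⟨p', hp', p, hp, r, hr, q, hq, hTp, hTp', hTr, hTq⟩ :=
    hT.exists_fixedPt_and_preimages hc hTTc hesc.le
  have hmem : ∀ {x}, x ∈ Function.eval 4 '' A ∪ Function.eval 4 '' B ↔
      ∀ k ≤ 4, T^[k] x ∈ Icc (T (T c)) (T c) := by
    rw [← image_union, hAB]
    exact mem_image_eval_invLimitSet (hT.surjOn_core hTTc hc)
  have hmaps : MapsTo T {p', p, r} {p', p, r} := by
    simp [MapsTo, hTp, hTp', hTr]
  have hcore : {p', p, r} ⊆ Icc (T (T c)) (T c) := by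
    rintro x (rfl | rfl | rfl)
    exacts [⟨hp'.1, hp'.2.trans hc⟩, ⟨hTTc.trans hp.1, hp.2⟩, ⟨hTTc.trans (hp.1.trans hr.1), hr.2⟩]
  have hmeets : {p', p, r} ⊆ Function.eval 4 '' A ∪ Function.eval 4 '' B := fun x hx =>
    hmem.2 fun k _ => hcore (hmaps.iterate k hx)
  rcases mem_or_mem_of_ordConnected_union (ordConnected_image_eval hA.isPreconnected 4)
    (ordConnected_image_eval hB.isPreconnected 4) (hmeets (by simp)) (hmeets (by simp))
    (hmeets (by simp)) ⟨hp'.2, hp.1⟩ hq with hcmem | hqmem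
  · exact hesc.not_ge (hmem.1 hcmem 3 (by lia)).1
  · have hq4 := (hmem.1 hqmem 4 le_rfl).1
    simp only [Function.iterate_succ_apply, Function.iterate_zero, id, hTq] at hq4
    exact hesc.not_ge hq4

end IsWeaklyUnimodalOn

theorem stmt2_general {T : ℝ → ℝ} {u v c : ℝ} (hT : IsWeaklyUnimodalOn T u v c)
    (hent : (Real.log √2 : EReal) < coverEntropy T (Icc u v)) :
    IsIndecomposable (coreInvLimitSet T c) := by
  have hpos : 0 < coverEntropy T (Icc u v) :=
    (EReal.coe_nonneg.2 (Real.log_nonneg (Real.one_le_sqrt.2 one_le_two))).trans_lt hent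
  have hc : c ≤ T c := (hT.crit_lt_apply hpos).le
  have hTTc : T (T c) ≤ c := (hT.apply_apply_lt_crit hpos).le
  rcases lt_or_ge (T (T (T c))) (T (T c)) with hesc | hinv
  · exact hT.isIndecomposable_of_apply_apply_apply_lt hc hTTc hesc
  · by_contra hdec
    exact hent.not_ge (hT.coverEntropy_le_of_not_isIndecomposable hc hTTc hinv hdec)

/-- If `T` is a unimodal map with `exp(h_top(T)) > √2` (equivalently,
`h_top(T) > log √2`), then the core inverse limit space `X'` is indecomposable. -/
theorem stmt2 (T : ℝ → ℝ) (c : ℝ) (hT : IsUnimodal T c)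
    (hent : (Real.log (Real.sqrt 2) : EReal) < Dynamics.coverEntropy T (Set.Icc 0 1)) :
    IsIndecomposable (coreInvLimitSet T c) :=
  stmt2_general hT.isWeaklyUnimodalOn hent
end

section
/- Let U ⊂ ℝ² be homeomorphic to the open unit disk, J ⊂ ℝ a closed interval, and W ⊂ ℝ a closed set such that W × J ⊂ U. Then there exists a continuous function f : ℝ² → ℝ² such that f({w} × J) is a single point for every w ∈ W, f({w} × J) ≠ f({w'} × J) for all w ≠ w' ∈ W, the restriction of f to U ∖ (W × J) is injective, and f is the identity on ℝ² ∖ U. -/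
/-!
Invariance of domain in the plane makes `U` open. Suppose `h` is continuous and injective on the
unit disk and omits a value `c` close to `h 0`. Then `h - c` is zero-free on the disk, and since
`h w ≠ h (-t w)` for `‖w‖ = 1` and `t ∈ [0, 1]`, it extends to a larger disk through the homotopy
`h w - h (-t w)`, which ends at an odd function. But a zero-free `F` on a disk has a continuous
logarithm `L`, and if `F` were odd on the boundary circle then `L (-z) - L z` would be constant and
odd there, hence `0`, although its exponential is `-1`.

For open `U`, the collapse preserves every vertical line. Take continuous functions `t, g ≥ 0`
vanishing exactly on `W` and on the complement of `U`, and let `m(y)` be the minimum of `g` on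
`{x} × [a, y]`. Moving `y` down by `min(m(b) (y - a)⁺, (b - a) m(max(b, y))) / (m(b) + t(x))`
squeezes `[a, b]` by the factor `t(x) / (m(b) + t(x))`, which is `0` exactly for `x ∈ W`, and
stretches the part of the line above `b` until it first leaves `U`.
-/

open Metric Set

theorem exists_continuous_exp_eq {A : Type*} [TopologicalSpace A] [SimplyConnectedSpace A]
    [LocallyPathConnectedSpace A] {F : A → ℂ} (hF : Continuous F) (hF₀ : ∀ a, F a ≠ 0) :
    ∃ L : A → ℂ, Continuous L ∧ ∀ a, Complex.exp (L a) = F a := by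
  obtain ⟨a₀⟩ : Nonempty A := inferInstance
  obtain ⟨L, ⟨-, hL⟩, -⟩ := Complex.isCoveringMap_exp.existsUnique_continuousMap_lifts
    ⟨fun a ↦ (⟨F a, hF₀ a⟩ : {z : ℂ // z ≠ 0}), by fun_prop⟩ a₀ (Complex.log (F a₀))
    (Subtype.ext (Complex.exp_log (hF₀ a₀)))
  exact ⟨L, L.continuous, fun a ↦ congrArg Subtype.val (congrFun hL a)⟩

theorem eq_of_isPreconnected_of_exp_eq {A : Type*} [TopologicalSpace A] {s : Set A}
    (hs : IsPreconnected s) {g : A → ℂ} (hg : ContinuousOn g s) {c : ℂ}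
    (hexp : ∀ a ∈ s, Complex.exp (g a) = c) {a b : A} (ha : a ∈ s) (hb : b ∈ s) : g a = g b :=
  Complex.isCoveringMap_exp.isSeparatedMap.constOn_of_comp
    Complex.isCoveringMap_exp.isLocalHomeomorph.isLocallyInjective hs hg
    (fun x hx y hy ↦ Subtype.ext ((hexp x hx).trans (hexp y hy).symm)) ha hb

section

variable {E : Type*} [NormedAddCommGroup E] [NormedSpace ℝ E]

theorem exists_mem_sphere_map_neg_ne (hE : 1 < Module.rank ℝ E) {F : E → ℂ} (hF : Continuous F)
    (hF₀ : ∀ z, F z ≠ 0) {r : ℝ} (hr : 0 ≤ r) : ∃ z ∈ sphere (0 : E) r, F (-z) ≠ -F z := by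
  by_contra! hodd
  obtain ⟨L, hL, hexp⟩ := exists_continuous_exp_eq hF hF₀
  have hjump : ∀ z ∈ sphere (0 : E) r, Complex.exp (L (-z) - L z) = -1 := fun z hz ↦ by
    rw [Complex.exp_sub, hexp, hexp, hodd z hz, neg_div, div_self (hF₀ z)]
  have : Nontrivial E := rank_pos_iff_nontrivial.mp (zero_lt_one.trans hE)
  obtain ⟨z, hz⟩ := NormedSpace.sphere_nonempty (x := (0 : E)).mpr hr
  have hz' : -z ∈ sphere (0 : E) r := by simpa using hz
  have hconst : L (-z) - L z = L (- -z) - L (-z) :=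
    eq_of_isPreconnected_of_exp_eq (isPreconnected_sphere hE 0 r)
      (g := fun z ↦ L (-z) - L z) (by fun_prop) hjump hz hz'
  have hzero : L (-z) - L z = 0 := by
    rw [neg_neg] at hconst
    linear_combination hconst / 2
  have := hjump z hz
  rw [hzero, Complex.exp_zero] at this
  norm_num at this

/-- The radial retraction of a normed space onto its closed unit ball. It extends maps defined on
the ball to the whole space. -/
noncomputable def ballRetraction (z : E) : E := (max 1 ‖z‖)⁻¹ • z

theorem continuous_ballRetraction : Continuous (ballRetraction : E → E) :=
  .smul (.inv₀ (by fun_prop) fun _ ↦ by positivity) continuous_id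

theorem norm_ballRetraction (z : E) : ‖ballRetraction z‖ = min 1 ‖z‖ := by
  rw [ballRetraction, norm_smul, norm_inv, Real.norm_of_nonneg (by positivity)]
  rcases le_total ‖z‖ 1 with h | h
  · simp [h]
  · simp [h, inv_mul_cancel₀ (zero_lt_one.trans_le h).ne']

theorem ballRetraction_mem_closedBall (z : E) : ballRetraction z ∈ closedBall (0 : E) 1 := by
  simp [norm_ballRetraction]

theorem ballRetraction_of_norm_le_one {z : E} (hz : ‖z‖ ≤ 1) : ballRetraction z = z := by
  simp [ballRetraction, hz]

theorem ballRetraction_neg (z : E) : ballRetraction (-z) = -ballRetraction z := by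
  simp [ballRetraction]

theorem exists_dist_map_neg_smul_le (hE : 1 < Module.rank ℝ E) {h : E → ℂ}
    (hc : ContinuousOn h (closedBall 0 1)) {c : ℂ} (hcim : c ∉ h '' closedBall 0 1) :
    ∃ w ∈ sphere (0 : E) 1, ∃ t ∈ Icc (0 : ℝ) 1, dist (h w) (h (-(t • w))) ≤ dist c (h 0) := by
  by_contra! hfar
  let β : E → ℝ := fun z ↦ projIcc 0 1 zero_le_one (‖z‖ - 1)
  have hβ : Continuous β := by fun_prop
  have hβI : ∀ z, β z ∈ Icc (0 : ℝ) 1 := fun z ↦ (projIcc 0 1 _ _).2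
  have hball : ∀ z, -(β z • ballRetraction z) ∈ closedBall (0 : E) 1 := fun z ↦ by
    rw [mem_closedBall_zero_iff, norm_neg, norm_smul, Real.norm_of_nonneg (hβI z).1,
      norm_ballRetraction]
    exact mul_le_one₀ (hβI z).2 (by positivity) (min_le_left _ _)
  -- `F` is `h z - c` on the unit ball; on the shell `1 ≤ ‖z‖ ≤ 2`, with `w = z / ‖z‖`, it is a
  -- homotopy from `h w - c` to the odd map `h w - h (-w)`.
  let F : E → ℂ := fun z ↦
    h (ballRetraction z) - h (-(β z • ballRetraction z)) - (1 - β z) • (c - h 0)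
  have hF : Continuous F := by
    have := continuous_ballRetraction (E := E)
    have h₁ : Continuous fun z ↦ h (ballRetraction z) :=
      hc.comp_continuous this ballRetraction_mem_closedBall
    have h₂ : Continuous fun z ↦ h (-(β z • ballRetraction z)) :=
      hc.comp_continuous (by fun_prop) hball
    exact (h₁.sub h₂).sub (by fun_prop)
  have hF₀ : ∀ z, F z ≠ 0 := fun z hz ↦ by
    rcases le_total ‖z‖ 1 with hz₁ | hz₁
    · have hβz : β z = 0 := by
        simp [β, projIcc_of_le_left zero_le_one (sub_nonpos.mpr hz₁)]
      refine hcim ⟨z, by simpa using hz₁, ?_⟩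
      simp only [F, hβz, ballRetraction_of_norm_le_one hz₁, zero_smul, neg_zero,
        sub_zero, one_smul] at hz
      linear_combination hz
    · have hlt := hfar (ballRetraction z) (by simp [norm_ballRetraction, hz₁]) (β z) (hβI z)
      rw [dist_eq_norm, dist_eq_norm, sub_eq_zero.mp hz, norm_smul,
        Real.norm_of_nonneg (sub_nonneg.mpr (hβI z).2)] at hlt
      exact hlt.not_ge (mul_le_of_le_one_left (norm_nonneg _) (sub_le_self _ (hβI z).1))
  obtain ⟨z, hz, hodd⟩ := exists_mem_sphere_map_neg_ne hE hF hF₀ zero_le_two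
  rw [mem_sphere_zero_iff_norm] at hz
  have hβ₁ : ∀ w : E, ‖w‖ = 2 → β w = 1 := fun w hw ↦ by
    simp only [β, hw]
    norm_num
  refine hodd ?_
  simp [F, hβ₁, hz, ballRetraction_neg]

theorem map_zero_mem_interior_image_closedBall [FiniteDimensional ℝ E]
    (hE : 1 < Module.rank ℝ E) {h : E → ℂ} (hc : ContinuousOn h (closedBall 0 1))
    (hinj : InjOn h (closedBall 0 1)) : h 0 ∈ interior (h '' closedBall 0 1) := by
  have := FiniteDimensional.proper_real E
  let K : Set (E × ℝ) := sphere 0 1 ×ˢ Icc 0 1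
  have hw : ∀ p ∈ K, p.1 ∈ closedBall (0 : E) 1 := fun p hp ↦ sphere_subset_closedBall hp.1
  have hv : ∀ p ∈ K, -(p.2 • p.1) ∈ closedBall (0 : E) 1 := fun p ⟨h₁, h₂⟩ ↦ by
    rw [mem_sphere_zero_iff_norm] at h₁
    simpa [norm_smul, h₁, abs_of_nonneg h₂.1] using h₂.2
  have hpos : ∀ p ∈ K, 0 < dist (h p.1) (h (-(p.2 • p.1))) := fun p hp ↦ by
    refine dist_pos.mpr fun heq ↦ ?_
    have hzero : (1 + p.2) • p.1 = 0 := by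
      rw [add_smul, one_smul, ← eq_neg_iff_add_eq_zero]
      exact hinj (hw p hp) (hv p hp) heq
    have hp₂ : 0 ≤ p.2 := hp.2.1
    exact ne_zero_of_mem_unit_sphere ⟨p.1, hp.1⟩
      ((smul_eq_zero.mp hzero).resolve_left (by positivity))
  obtain ⟨ρ, hρ, hle⟩ := ((isCompact_sphere _ _).prod isCompact_Icc).exists_forall_le'
    (continuous_dist.comp_continuousOn
      ((hc.comp (by fun_prop) hw).prodMk (hc.comp (by fun_prop) hv))) hpos
  rw [mem_interior_iff_mem_nhds, Metric.mem_nhds_iff]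
  refine ⟨ρ, hρ, fun c hcρ ↦ ?_⟩
  by_contra hcim
  obtain ⟨w, hwS, t, ht, hdist⟩ := exists_dist_map_neg_smul_le hE hc hcim
  exact ((hle (w, t) ⟨hwS, ht⟩).trans hdist).not_gt hcρ

variable {F : Type*} [NormedAddCommGroup F] [NormedSpace ℝ F]

theorem isOpen_image_of_continuousOn_of_injOn (hE : 1 < Module.finrank ℝ E)
    (hF : Module.finrank ℝ F = 2) {V : Set E} (hV : IsOpen V) {f : E → F}
    (hf : ContinuousOn f V) (hinj : InjOn f V) : IsOpen (f '' V) := by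
  have : FiniteDimensional ℝ E := .of_finrank_pos (zero_lt_one.trans hE)
  have : FiniteDimensional ℝ F := .of_finrank_eq_succ hF
  let e : F ≃L[ℝ] ℂ := .ofFinrankEq (hF.trans Complex.finrank_real_complex.symm)
  rw [← e.toHomeomorph.isOpen_image, isOpen_iff_mem_nhds]
  rintro _ ⟨_, ⟨x, hx, rfl⟩, rfl⟩
  obtain ⟨r, hr, hrV⟩ := nhds_basis_closedBall.mem_iff.mp (hV.mem_nhds hx)
  have hmaps : MapsTo (fun z : E ↦ x + r • z) (closedBall 0 1) V := fun z hz ↦ hrV <| by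
    rw [mem_closedBall_zero_iff] at hz
    simpa [norm_smul, abs_of_pos hr] using mul_le_of_le_one_right hr.le hz
  have hint := map_zero_mem_interior_image_closedBall (h := fun z ↦ e (f (x + r • z)))
    (Module.one_lt_rank_of_one_lt_finrank hE)
    (e.continuous.comp_continuousOn (hf.comp (by fun_prop) hmaps))
    fun z hz z' hz' heq ↦ smul_right_injective E hr.ne' <| add_left_cancel <|
      hinj (hmaps hz) (hmaps hz') (e.injective heq)
  refine Filter.mem_of_superset (mem_interior_iff_mem_nhds.mp (by simpa using hint)) ?_
  rintro _ ⟨z, hz, rfl⟩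
  exact mem_image_of_mem _ (mem_image_of_mem f (hmaps hz))

theorem isOpen_of_homeomorph (hE : 1 < Module.finrank ℝ E) (hF : Module.finrank ℝ F = 2)
    {V : Set E} (hV : IsOpen V) {U : Set F} (φ : V ≃ₜ U) : IsOpen U := by
  let f : E → F := Function.extend Subtype.val (fun x ↦ (φ x : F)) 0
  have hf : V.domRestrict f = fun x ↦ (φ x : F) :=
    funext fun x ↦ Subtype.val_injective.extend_apply (fun x ↦ (φ x : F)) 0 x
  have himage : f '' V = U := by
    rw [← range_domRestrict, hf]
    exact (φ.surjective.range_comp Subtype.val).trans Subtype.range_coe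
  rw [← himage]
  refine isOpen_image_of_continuousOn_of_injOn hE hF hV ?_ ?_
  · rw [continuousOn_iff_continuous_domRestrict, hf]
    fun_prop
  · rw [injOn_iff_injective, hf]
    exact Subtype.val_injective.comp φ.injective

end

/-- A self-map of the line that pinches `[a, b]` to the point `a` when the parameter `t` is `0` and
is strictly increasing when `t > 0`. The antitone weight `m` makes room above `b`: the points of
`[b, ∞)` where `m` vanishes are fixed. Equivalently, `y` is moved down by the minimum of
`m b * (y - a)⁺` and `(b - a) * m (max b y)`, divided by `m b + t`. -/
noncomputable def pinch (a b t : ℝ) (m : ℝ → ℝ) (y : ℝ) : ℝ :=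
  min y (max (a + t / (m b + t) * (y - a)) (y - (b - a) * (m (max b y) / (m b + t))))

section Pinch

variable {a b t y : ℝ} {m : ℝ → ℝ}

theorem pinch_eq_self_of_le (hm : 0 ≤ m b) (ht : 0 ≤ t) (hy : y ≤ a) : pinch a b t m y = y := by
  have : t / (m b + t) ≤ 1 := div_le_one_of_le₀ (by linarith) (by linarith)
  exact min_eq_left (le_max_of_le_left (by nlinarith))

theorem pinch_eq_self_of_eq_zero (hm : m (max b y) = 0) : pinch a b t m y = y := by
  simp [pinch, hm]

theorem pinch_zero_eq_left (hm : m b ≠ 0) (hy : y ∈ Icc a b) : pinch a b 0 m y = a := by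
  have : y - (b - a) ≤ a := by linarith [hy.2]
  simp [pinch, hm, max_eq_left hy.2, this, hy.1]

theorem strictMonoOn_pinch (hab : a ≤ b) (hm : AntitoneOn m (Ici b)) (ht : 0 ≤ t)
    (hmt : 0 < m b + t) : StrictMonoOn (pinch a b t m) {y | t = 0 → y ∉ Icc a b} := by
  intro y₁ hy₁ y₂ hy₂ hlt
  have hmax : ∀ y, max b y ∈ Ici b := le_max_left b
  have hupper : y₁ - (b - a) * (m (max b y₁) / (m b + t)) <
      y₂ - (b - a) * (m (max b y₂) / (m b + t)) := by
    have hmono : m (max b y₂) ≤ m (max b y₁) := hm (hmax _) (hmax _) (max_le_max_left _ hlt.le)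
    have hdrop := mul_le_mul_of_nonneg_left (div_le_div_of_nonneg_right hmono hmt.le)
      (sub_nonneg.mpr hab)
    linarith
  rcases ht.eq_or_lt with rfl | ht
  · rcases lt_or_ge y₁ a with ha | ha
    · exact (min_le_left _ _).trans_lt (lt_min hlt (lt_max_of_lt_left (by simpa using ha)))
    · have hb : b < y₂ := (not_le.mp fun h ↦ hy₁ rfl ⟨ha, h⟩).trans hlt
      have hratio : m (max b y₂) / (m b + 0) ≤ 1 :=
        div_le_one_of_le₀ (by simpa using hm self_mem_Ici (hmax _) (hmax _)) hmt.le
      have hshift := mul_le_of_le_one_right (sub_nonneg.mpr hab) hratio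
      refine min_lt_min hlt (lt_max_of_lt_right (max_lt ?_ hupper))
      rw [zero_div, zero_mul]
      linarith
  · exact min_lt_min hlt (max_lt_max (by gcongr) hupper)

end Pinch

/-- The infimum of `g` over the vertical segment from `(x, a)` to `(x, y)`. For `g ≥ 0` with zero
set `Uᶜ`, it is a weight for `pinch` that vanishes once the segment has left `U`. -/
noncomputable def verticalInf {X : Type*} (g : X × ℝ → ℝ) (a : ℝ) (x : X) (y : ℝ) : ℝ :=
  sInf ((fun v ↦ g (x, v)) '' uIcc a y)

section VerticalInf

variable {X : Type*} {g : X × ℝ → ℝ} {a y v : ℝ} {x : X}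

theorem verticalInf_nonneg (hg₀ : ∀ p, 0 ≤ g p) : 0 ≤ verticalInf g a x y :=
  Real.sInf_nonneg (forall_mem_image.mpr fun _ _ ↦ hg₀ _)

theorem verticalInf_le (hg₀ : ∀ p, 0 ≤ g p) (hv : v ∈ uIcc a y) : verticalInf g a x y ≤ g (x, v) :=
  csInf_le ⟨0, forall_mem_image.mpr fun _ _ ↦ hg₀ _⟩ (mem_image_of_mem _ hv)

theorem antitoneOn_verticalInf (hg₀ : ∀ p, 0 ≤ g p) :
    AntitoneOn (verticalInf g a x) (Ici a) := fun y hy z hz hyz ↦ by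
  rw [verticalInf, verticalInf]
  refine csInf_le_csInf ⟨0, forall_mem_image.mpr fun _ _ ↦ hg₀ _⟩ (nonempty_uIcc.image _)
    (image_mono ?_)
  rw [uIcc_of_le hy, uIcc_of_le hz]
  exact Icc_subset_Icc_right hyz

variable [TopologicalSpace X]

theorem verticalInf_pos (hg : Continuous g) (hg₀ : ∀ p, 0 ≤ g p)
    (hne : ∀ v ∈ uIcc a y, g (x, v) ≠ 0) : 0 < verticalInf g a x y := by
  obtain ⟨v, hv, hmin⟩ := isCompact_uIcc.exists_sInf_image_eq nonempty_uIcc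
    (f := fun v ↦ g (x, v)) (by fun_prop)
  exact ((hg₀ _).lt_of_ne' (hne v hv)).trans_eq hmin.symm

theorem continuous_verticalInf (hg : Continuous g) :
    Continuous fun p : X × ℝ ↦ verticalInf g a p.1 p.2 := by
  simp only [verticalInf, ← segment_eq_uIcc, segment_eq_image_lineMap, image_image]
  refine isCompact_Icc.continuous_sInf ?_
  simp only [Function.HasUncurry.uncurry, AffineMap.lineMap_apply]
  fun_prop

end VerticalInf

/-- The fibrewise `pinch` of `X × ℝ`: on the fibre over `x` the parameter is `t x` and the weight is
`verticalInf g a x`. With `t` and `g` vanishing exactly on `W` and on `Uᶜ`, it is the collapse of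
the segments `{w} × [a, b]`, `w ∈ W`, inside `U`. -/
noncomputable def verticalPinch {X : Type*} (g : X × ℝ → ℝ) (t : X → ℝ) (a b : ℝ) (p : X × ℝ) :
    X × ℝ :=
  (p.1, pinch a b (t p.1) (verticalInf g a p.1) p.2)

section VerticalPinch

variable {X : Type*} {g : X × ℝ → ℝ} {t : X → ℝ} {a b : ℝ}

theorem continuous_verticalPinch [TopologicalSpace X] (hg : Continuous g) (ht : Continuous t)
    (hpos : ∀ x, 0 < verticalInf g a x b + t x) : Continuous (verticalPinch g t a b) := by
  have hinf {v : X × ℝ → ℝ} (hv : Continuous v) :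
      Continuous fun p ↦ verticalInf g a p.1 (v p) :=
    (continuous_verticalInf hg).comp (continuous_fst.prodMk hv)
  have htop : Continuous fun p : X × ℝ ↦ verticalInf g a p.1 (max b p.2) := hinf (by fun_prop)
  have hne : ∀ p : X × ℝ, verticalInf g a p.1 b + t p.1 ≠ 0 := fun p ↦ (hpos p.1).ne'
  unfold verticalPinch pinch
  fun_prop (disch := assumption)

theorem image_verticalPinch (hab : a ≤ b) {w : X} (ht : t w = 0) (hpos : verticalInf g a w b ≠ 0) :
    verticalPinch g t a b '' ({w} ×ˢ Icc a b) = {(w, a)} := by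
  rw [singleton_prod, image_image]
  have : EqOn (fun y ↦ verticalPinch g t a b (w, y)) (fun _ ↦ (w, a)) (Icc a b) := fun y hy ↦ by
    simp [verticalPinch, ht, pinch_zero_eq_left hpos hy]
  rw [this.image_eq, (nonempty_Icc.mpr hab).image_const]

theorem injOn_verticalPinch (hab : a ≤ b) (hg₀ : ∀ p, 0 ≤ g p) (ht₀ : ∀ x, 0 ≤ t x)
    (hpos : ∀ x, 0 < verticalInf g a x b + t x) :
    InjOn (verticalPinch g t a b) ((t ⁻¹' {0}) ×ˢ Icc a b)ᶜ := by
  rintro ⟨x, y⟩ hy ⟨x', y'⟩ hy' heq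
  obtain ⟨rfl, heq⟩ := Prod.mk.inj heq
  have hm := (antitoneOn_verticalInf (x := x) hg₀).mono (Ici_subset_Ici.mpr hab)
  exact Prod.ext rfl <| (strictMonoOn_pinch hab hm (ht₀ x) (hpos x)).injOn
    (fun h h' ↦ hy ⟨h, h'⟩) (fun h h' ↦ hy' ⟨h, h'⟩) heq

theorem verticalPinch_eq_self (hg₀ : ∀ p, 0 ≤ g p) (ht₀ : ∀ x, 0 ≤ t x) {p : X × ℝ}
    (hp : g p = 0) : verticalPinch g t a b p = p := by
  refine Prod.ext rfl ?_
  rcases le_total p.2 a with hle | hle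
  · exact pinch_eq_self_of_le (verticalInf_nonneg hg₀) (ht₀ _) hle
  · refine pinch_eq_self_of_eq_zero (le_antisymm ?_ (verticalInf_nonneg hg₀))
    refine hp ▸ verticalInf_le hg₀ ?_
    rw [uIcc_of_le (hle.trans (le_max_right _ _))]
    exact ⟨hle, le_max_right _ _⟩

end VerticalPinch

theorem stmt14_general {X : Type*} [TopologicalSpace X] [PerfectlyNormalSpace (X × ℝ)]
    {U : Set (X × ℝ)} (hU : IsOpen U) {a b : ℝ} (hab : a ≤ b) {W : Set X} (hW : IsClosed W)
    (hWJ : W ×ˢ Icc a b ⊆ U) :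
    ∃ f : X × ℝ → X × ℝ, Continuous f ∧
      (∀ w ∈ W, ∃ p : X × ℝ, f '' ({w} ×ˢ Icc a b) = {p}) ∧
      (∀ w ∈ W, ∀ w' ∈ W, w ≠ w' → f '' ({w} ×ˢ Icc a b) ≠ f '' ({w'} ×ˢ Icc a b)) ∧
      InjOn f (W ×ˢ Icc a b)ᶜ ∧
      ∀ p ∉ U, f p = p := by
  have : PerfectlyNormalSpace X := (isEmbedding_prodMkLeft (0 : ℝ)).isInducing.perfectlyNormalSpace
  obtain ⟨g, hgU, hgI⟩ := perfectlyNormalSpace_iff_forall_isClosed_preimage_zero.mp inferInstance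
    Uᶜ hU.isClosed_compl
  obtain ⟨t, rfl, htI⟩ := perfectlyNormalSpace_iff_forall_isClosed_preimage_zero.mp inferInstance
    W hW
  have hg₀ := fun p ↦ (hgI p).1
  have ht₀ := fun x ↦ (htI x).1
  have hinf : ∀ w, t w = 0 → 0 < verticalInf g a w b := fun w hw ↦
    verticalInf_pos g.continuous hg₀ fun v hv hgv ↦
      (hgU.symm.subset hgv : (w, v) ∈ Uᶜ) (hWJ ⟨hw, uIcc_of_le hab ▸ hv⟩)
  have hpos : ∀ x, 0 < verticalInf g a x b + t x := fun x ↦ by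
    by_cases hx : t x = 0
    · simpa [hx] using hinf x hx
    · exact add_pos_of_nonneg_of_pos (verticalInf_nonneg hg₀) ((ht₀ x).lt_of_ne' hx)
  have himage := fun w hw ↦ image_verticalPinch (t := t) hab hw (hinf w hw).ne'
  refine ⟨verticalPinch g t a b, continuous_verticalPinch g.continuous t.continuous hpos,
    fun w hw ↦ ⟨_, himage w hw⟩, fun w hw w' hw' hne heq ↦ hne ?_,
    injOn_verticalPinch hab hg₀ ht₀ hpos, fun p hp ↦ verticalPinch_eq_self hg₀ ht₀ (hgU.subset hp)⟩
  rw [himage w hw, himage w' hw', singleton_eq_singleton_iff] at heq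
  exact congrArg Prod.fst heq

/-- Let `U ⊆ ℝ²` be homeomorphic to the open unit disk, let `J = [a,b] ⊆ ℝ` be a closed
interval and `W ⊆ ℝ` a closed set with `W × J ⊆ U`. Then there is a continuous
`f : ℝ² → ℝ²` collapsing each segment `{w} × J` (`w ∈ W`) to a point, with distinct
segments going to distinct points, injective on `U ∖ (W × J)`, and equal to the
identity outside `U`. -/
theorem stmt14 (U : Set (ℝ × ℝ)) (hU : Nonempty (U ≃ₜ Metric.ball (0 : ℝ × ℝ) 1))
    (a b : ℝ) (hab : a ≤ b) (W : Set ℝ) (hW : IsClosed W)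
    (hWJ : W ×ˢ Set.Icc a b ⊆ U) :
    ∃ f : ℝ × ℝ → ℝ × ℝ, Continuous f ∧
      (∀ w ∈ W, ∃ p : ℝ × ℝ, f '' ({w} ×ˢ Set.Icc a b) = {p}) ∧
      (∀ w ∈ W, ∀ w' ∈ W, w ≠ w' → f '' ({w} ×ˢ Set.Icc a b) ≠ f '' ({w'} ×ˢ Set.Icc a b)) ∧
      Set.InjOn f (U \ W ×ˢ Set.Icc a b) ∧
      ∀ x ∉ U, f x = x := by
  obtain ⟨φ⟩ := hU
  obtain ⟨f, hf, hpoint, hne, hinj, hid⟩ := stmt14_general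
    (isOpen_of_homeomorph (by simp) (by simp) isOpen_ball φ.symm) hab hW hWJ
  exact ⟨f, hf, hpoint, hne, hinj.mono fun _ hp ↦ hp.2, hid⟩
end
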